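/- Let n ≥ 3, m₁ ≥ 0, m₂ ≥ 1, λ = (0, m₂, …, m₂, m₁+m₂) and λ⁺ = (0, m₂+1, …, m₂+1, m₁+m₂+1). Then for every 2 ≤ j ≤ n−1 and every k ∈ ℤ_{≥0}^n: c^{λ⁺}_{j|1}(k_1+1, …, k_{j−1}+1, k_j, k_{j+1}+1, …, k_n+1) = c^{λ⁺}_{j+1|1}(k_1+1, …, k_j+1, k_{j+1}, k_{j+2}+1, …, k_n+1) − (1 − q^{m₂}) · c^{λ}_{j+1|1}(k_1,…,k_n). -/

import Mathlib

open Finset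

namespace CO

/-- The column diagram `dg'(λ)` of a composition, as a finset of boxes `(i, j)`,
`1 ≤ i ≤ n`, `1 ≤ j ≤ λ_i`. -/
def dgF (n : ℕ) (lam : ℕ → ℕ) : Finset (ℕ × ℕ) :=
  (Finset.Icc 1 n).biUnion fun i => (Finset.Icc 1 (lam i)).image fun j => (i, j)

/-- The augmented diagram `d̂g(λ)`: one extra box `(i, 0)` below each column. -/
def augF (n : ℕ) (lam : ℕ → ℕ) : Finset (ℕ × ℕ) :=
  dgF n lam ∪ (Finset.Icc 1 n).image fun i => (i, 0)

/-- The box `d(u)` directly below a box. -/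
def dbox (u : ℕ × ℕ) : ℕ × ℕ := (u.1, u.2 - 1)

/-- The augmented filling `σ̂`: equal to `σ` on positive rows and to `i` on `(i, 0)`. -/
def aug (σ : ℕ × ℕ → ℕ) (u : ℕ × ℕ) : ℕ := if u.2 = 0 then u.1 else σ u

/-- A filling takes values in `{1, …, n}` on the diagram. -/
def IsFilling (n : ℕ) (lam : ℕ → ℕ) (σ : ℕ × ℕ → ℕ) : Prop :=
  ∀ u ∈ dgF n lam, 1 ≤ σ u ∧ σ u ≤ n

/-- Attacking boxes: same row, or consecutive rows with the lower box to the right. -/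
def Attack (u v : ℕ × ℕ) : Prop :=
  u ≠ v ∧ (u.2 = v.2 ∨ (u.2 = v.2 + 1 ∧ u.1 < v.1) ∨ (v.2 = u.2 + 1 ∧ v.1 < u.1))

/-- A non-attacking filling: `σ̂` takes distinct values on attacking pairs of the
augmented diagram. -/
def NonAttacking (n : ℕ) (lam : ℕ → ℕ) (σ : ℕ × ℕ → ℕ) : Prop :=
  ∀ u ∈ augF n lam, ∀ v ∈ augF n lam, Attack u v → aug σ u ≠ aug σ v

/-- The arm of a box `u`. -/
def armF (n : ℕ) (lam : ℕ → ℕ) (u : ℕ × ℕ) : Finset (ℕ × ℕ) :=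
  ((dgF n lam).filter fun v => v.1 < u.1 ∧ v.2 = u.2 ∧ lam v.1 ≤ lam u.1) ∪
    ((augF n lam).filter fun v => u.1 < v.1 ∧ v.2 + 1 = u.2 ∧ lam v.1 < lam u.1)

/-- `a(u) = |arm(u)|`. -/
def armCard (n : ℕ) (lam : ℕ → ℕ) (u : ℕ × ℕ) : ℕ := (armF n lam u).card

/-- The number of inversions of `σ̂`: attacking pairs `u, u'` with `σ̂(u) < σ̂(u')`
and (same row with `u` to the left, or `u'` one row above `u` strictly to the left). -/
def invCard (n : ℕ) (lam : ℕ → ℕ) (σ : ℕ × ℕ → ℕ) : ℕ :=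
  ((augF n lam ×ˢ augF n lam).filter fun p =>
    aug σ p.1 < aug σ p.2 ∧
      ((p.1.2 = p.2.2 ∧ p.1.1 < p.2.1) ∨ (p.2.2 = p.1.2 + 1 ∧ p.2.1 < p.1.1))).card

/-- The descent set of `σ̂`. -/
def desF (n : ℕ) (lam : ℕ → ℕ) (σ : ℕ × ℕ → ℕ) : Finset (ℕ × ℕ) :=
  (dgF n lam).filter fun u => aug σ (dbox u) < aug σ u

/-- The statistic `coinv(σ̂)` (as an integer). -/
def coinv (n : ℕ) (lam : ℕ → ℕ) (σ : ℕ × ℕ → ℕ) : ℤ :=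
  (∑ u ∈ dgF n lam, (armCard n lam u : ℤ)) - invCard n lam σ +
    (((Finset.Icc 1 n ×ˢ Finset.Icc 1 n).filter fun p =>
      p.1 < p.2 ∧ lam p.1 ≤ lam p.2).card : ℤ) +
    ∑ u ∈ desF n lam σ, (armCard n lam u : ℤ)

/-- The statistic `T(σ)`. -/
def Tstat (n : ℕ) (lam : ℕ → ℕ) (σ : ℕ × ℕ → ℕ) : ℤ :=
  coinv n lam σ -
    ∑ u ∈ (dgF n lam).filter fun u => aug σ u ≠ aug σ (dbox u), (armCard n lam u : ℤ)

/-- Antidominant composition: `λ_1 ≤ ⋯ ≤ λ_n`. -/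
def Antidominant (n : ℕ) (lam : ℕ → ℕ) : Prop :=
  ∀ i j, 1 ≤ i → i ≤ j → j ≤ n → lam i ≤ lam j

/-- Appropriate filling: non-attacking with `T(σ) = 0`. -/
def Appropriate (n : ℕ) (lam : ℕ → ℕ) (σ : ℕ × ℕ → ℕ) : Prop :=
  IsFilling n lam σ ∧ NonAttacking n lam σ ∧ Tstat n lam σ = 0

/-- The operation `π` on compositions: `π(λ) = (λ_n + 1, λ_1, …, λ_{n-1})`. -/
def piComp (n : ℕ) (lam : ℕ → ℕ) : ℕ → ℕ :=
  fun i => if i = 1 then lam n + 1 else lam (i - 1)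

/-- The operation `π` on boxes. -/
def piBox (n : ℕ) (u : ℕ × ℕ) : ℕ × ℕ :=
  if u.1 < n then (u.1 + 1, u.2) else (1, u.2 + 1)

/-- Extension by zero of a function defined on the diagram. -/
def ext (n : ℕ) (lam : ℕ → ℕ) (f : {u // u ∈ dgF n lam} → ℕ) : ℕ × ℕ → ℕ :=
  fun u => if h : u ∈ dgF n lam then f ⟨u, h⟩ else 0

/-- `qstat(σ) = Σ (l(u) + 1)` over boxes `u` with `σ̂(u) < σ̂(d(u))`. -/
def qstat (n : ℕ) (lam : ℕ → ℕ) (σ : ℕ × ℕ → ℕ) : ℕ :=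
  ∑ u ∈ (dgF n lam).filter fun u => aug σ u < aug σ (dbox u), (lam u.1 - u.2 + 1)

end CO

namespace CO

/-- The statistic `asc(τ) = Σ (l(u) + 1)` over boxes `u = (i, j)` with `j ≥ 2` and
`τ(u) < τ(d(u))`. -/
def ascStat (n : ℕ) (mu : ℕ → ℕ) (τ : ℕ × ℕ → ℕ) : ℕ :=
  ∑ u ∈ (dgF n mu).filter fun u => 2 ≤ u.2 ∧ τ u < τ (dbox u), (mu u.1 - u.2 + 1)

/-- The greedy rule (iii): for boxes in rows `≥ 2`, with `S = τ(arm(u)) ∪ {τ(u)}`,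
`τ(u)` is the minimum of `{x ∈ S : x ≥ τ(d(u))}` if nonempty, and `min S` otherwise. -/
def GreedyRule (n : ℕ) (mu : ℕ → ℕ) (τ : ℕ × ℕ → ℕ) : Prop :=
  ∀ u ∈ dgF n mu, 2 ≤ u.2 →
    (({x ∈ τ '' ↑(armF n mu u) ∪ {τ u} | τ (dbox u) ≤ x}.Nonempty →
        τ u = sInf {x ∈ τ '' ↑(armF n mu u) ∪ {τ u} | τ (dbox u) ≤ x}) ∧
      (¬ {x ∈ τ '' ↑(armF n mu u) ∪ {τ u} | τ (dbox u) ≤ x}.Nonempty →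
        τ u = sInf (τ '' ↑(armF n mu u) ∪ {τ u})))

/-- Conditions (i)–(iv) on the fillings `τ` counted by `c_a^μ(k)`. -/
def CCond (n : ℕ) (mu : ℕ → ℕ) (a : ℕ → ℕ) (k : ℕ → ℕ) (τ : ℕ × ℕ → ℕ) : Prop :=
  (∀ u ∈ dgF n mu, 1 ≤ τ u ∧ τ u ≤ n) ∧
    (∀ j, (j, 1) ∈ dgF n mu → τ (j, 1) = a j) ∧
    (∀ u ∈ dgF n mu, ∀ v ∈ dgF n mu, Attack u v → τ u ≠ τ v) ∧
    GreedyRule n mu τ ∧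
    ∀ i, 1 ≤ i → i ≤ n → ((dgF n mu).filter fun u => τ u = i).card = k i

open Classical in
/-- The coefficient `c_a^μ(k) ∈ ℤ[q]`: the generating function `Σ_τ q^{asc(τ)}`
over fillings satisfying (i)–(iv). -/
noncomputable def cCoef (n : ℕ) (mu : ℕ → ℕ) (a : ℕ → ℕ) (k : ℕ → ℕ) : Polynomial ℤ :=
  ∑ f ∈ (Fintype.piFinset fun _ : {u // u ∈ dgF n mu} => Finset.Icc 1 n).filter
      fun f => CCond n mu a k (ext n mu f),
    Polynomial.X ^ ascStat n mu (ext n mu f)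

end CO

namespace CO

/-- The bottom-row tuple defining `c^μ_{ã|b}` (for `s = n - 1`): entry `b` at
position `n`, and the elements of `{1, …, n} ∖ {ã, b}` in decreasing order at
positions `2, …, n - 1`. -/
def aTuple (n atil b : ℕ) : ℕ → ℕ :=
  fun j => if j = n then b
    else ((((Finset.Icc 1 n).erase atil).erase b).sort (· ≤ ·)).getD (n - 1 - j) 0

/-- The coefficient `c^μ_{ã|b}(k)`. -/
noncomputable def cBar (n : ℕ) (mu : ℕ → ℕ) (atil b : ℕ) (k : ℕ → ℕ) : Polynomial ℤ :=
  cCoef n mu (aTuple n atil b) k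

end CO


namespace CO
open Polynomial

def LL (n p m : ℕ) : ℕ → ℕ := fun i => if i = n then p + m else if 2 ≤ i then m else 0

open Classical in
noncomputable def FF {α : Type} (A : Finset α) (n : ℕ) : Finset (α → ℕ) :=
  (Fintype.piFinset fun _ : {u // u ∈ A} => Finset.Icc 1 n).image
    (fun f u => if h : u ∈ A then f ⟨u, h⟩ else 0)

lemma mem_FF {α : Type} (A : Finset α) (n : ℕ) (g : α → ℕ) :
    g ∈ FF A n ↔ (∀ u ∈ A, 1 ≤ g u ∧ g u ≤ n) ∧ ∀ u, u ∉ A → g u = 0 := by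
  classical
  simp only [FF, Finset.mem_image, Fintype.mem_piFinset, Finset.mem_Icc]
  constructor
  · rintro ⟨f, hf, rfl⟩
    refine ⟨fun u hu => ?_, fun u hu => ?_⟩
    · simp only [hu, dif_pos]; exact hf ⟨u, hu⟩
    · simp [hu]
  · rintro ⟨h1, h2⟩
    refine ⟨fun u => g u.1, fun u => h1 u.1 u.2, ?_⟩
    funext u
    by_cases hu : u ∈ A
    · simp [hu]
    · simp [hu, h2 u hu]

def Loc (n : ℕ) (a c : ℕ → ℕ) (i : ℕ) : Prop :=
  (∀ i', i < i' → i' ≤ n → c i ≠ a i') ∧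
    ((a i ≤ c i ∧ ∀ k, 2 ≤ k → k < i → a i ≤ c k → c i ≤ c k) ∨
      (c i < a i ∧ ∀ k, 2 ≤ k → k < i → c k < a i ∧ c i ≤ c k))

def Inj (n : ℕ) (c : ℕ → ℕ) : Prop := ∀ i i', 2 ≤ i → i < i' → i' ≤ n → c i ≠ c i'

def OK (n m : ℕ) (τ : ℕ × ℕ → ℕ) : Prop :=
  (∀ r, 1 ≤ r → r ≤ m → Inj n (fun x => τ (x, r))) ∧
    ∀ r, 1 ≤ r → r + 1 ≤ m → ∀ i, 2 ≤ i → i ≤ n →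
      Loc n (fun x => τ (x, r)) (fun x => τ (x, r + 1)) i

def DCond (n p m : ℕ) (a : ℕ → ℕ) (κ : ℕ → ℤ) (τ : ℕ × ℕ → ℕ) : Prop :=
  (∀ i, 2 ≤ i → i ≤ n → τ (i, 1) = a i) ∧ OK n m τ ∧
    ∀ i, 1 ≤ i → i ≤ n → (((dgF n (LL n p m)).filter fun u => τ u = i).card : ℤ) = κ i

open Classical in
noncomputable def DD (n p m : ℕ) (a : ℕ → ℕ) (κ : ℕ → ℤ) : ℤ[X] :=
  ∑ τ ∈ (FF (dgF n (LL n p m)) n).filter (fun τ => DCond n p m a κ τ),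
    X ^ ascStat n (LL n p m) τ

lemma mem_dg {n p m i r : ℕ} (hn : 2 ≤ n) :
    (i, r) ∈ dgF n (LL n p m) ↔ 2 ≤ i ∧ i ≤ n ∧ 1 ≤ r ∧ r ≤ LL n p m i := by
  simp only [dgF, mem_biUnion, Finset.mem_Icc, mem_image, Prod.mk.injEq, LL]
  constructor
  · rintro ⟨x, ⟨h1, h2⟩, y, ⟨h3, h4⟩, rfl, rfl⟩
    refine ⟨?_, h2, h3, h4⟩
    by_contra h
    rw [if_neg (by omega), if_neg (by omega)] at h4
    omega
  · rintro ⟨h1, h2, h3, h4⟩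
    exact ⟨i, ⟨by omega, h2⟩, r, ⟨h3, h4⟩, rfl, rfl⟩

lemma LL_ge {n p m i : ℕ} (hi : 2 ≤ i) : m ≤ LL n p m i := by
  unfold LL; split_ifs <;> omega

lemma LL_lt {n p m i : ℕ} (hi : 2 ≤ i) (hi' : i < n) : LL n p m i = m := by
  unfold LL; rw [if_neg (by omega), if_pos hi]

lemma nx_iff (S : Set ℕ) (d y : ℕ) :
    (({x ∈ S ∪ {y} | d ≤ x}.Nonempty → y = sInf {x ∈ S ∪ {y} | d ≤ x}) ∧
      (¬ {x ∈ S ∪ {y} | d ≤ x}.Nonempty → y = sInf (S ∪ {y}))) ↔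
    ((d ≤ y ∧ ∀ z ∈ S, d ≤ z → y ≤ z) ∨ (y < d ∧ ∀ z ∈ S, z < d ∧ y ≤ z)) := by
  have key : ∀ (T : Set ℕ), y ∈ T → (y = sInf T ↔ ∀ z ∈ T, y ≤ z) := by
    intro T hT
    constructor
    · intro h z hz; rw [h]; exact Nat.sInf_le hz
    · intro h; exact le_antisymm (le_csInf ⟨y, hT⟩ h) (Nat.sInf_le hT)
  have h2 := key (S ∪ {y}) (by simp)
  rw [h2]
  by_cases hd : d ≤ y
  · have hy : y ∈ {x ∈ S ∪ {y} | d ≤ x} := by simp [hd]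
    rw [key _ hy]
    have : {x ∈ S ∪ {y} | d ≤ x}.Nonempty := ⟨y, hy⟩
    simp only [this, not_true_eq_false, false_imp_iff, true_imp_iff, and_true]
    constructor
    · intro h; left; exact ⟨hd, fun z hz hz' => h z ⟨Or.inl hz, hz'⟩⟩
    · rintro (⟨_, h⟩ | ⟨h, _⟩)
      · rintro z ⟨hz | hz, hz'⟩
        · exact h z hz hz'
        · simp only [Set.mem_singleton_iff] at hz; omega
      · omega
  · constructor
    · rintro ⟨hA, hB⟩
      right
      refine ⟨by omega, ?_⟩
      by_cases hne : {x ∈ S ∪ {y} | d ≤ x}.Nonempty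
      · have h1 := Nat.sInf_mem hne
        rw [← hA hne] at h1
        exact absurd h1.2 hd
      · intro z hz
        refine ⟨?_, hB hne z (Or.inl hz)⟩
        by_contra hc
        exact hne ⟨z, Or.inl hz, by omega⟩
    · rintro (⟨h, _⟩ | ⟨h, h'⟩)
      · omega
      · have hne : ¬ {x ∈ S ∪ {y} | d ≤ x}.Nonempty := by
          rintro ⟨z, hz | hz, hz'⟩
          · have := (h' z hz).1; omega
          · simp only [Set.mem_singleton_iff] at hz; omega
        refine ⟨fun h => absurd h hne, fun _ z hz => ?_⟩
        rcases hz with hz | hz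
        · exact (h' z hz).2
        · simp only [Set.mem_singleton_iff] at hz; omega

lemma LL_mono {n p m i i' : ℕ} (h : i ≤ i') (h' : i' ≤ n) : LL n p m i ≤ LL n p m i' := by
  unfold LL; split_ifs <;> omega

lemma mem_arm {n p m i r : ℕ} (hn : 2 ≤ n) (hi : i ≤ n) (v : ℕ × ℕ) :
    v ∈ armF n (LL n p m) (i, r) ↔ v.2 = r ∧ v.1 < i ∧ 2 ≤ v.1 ∧ 1 ≤ r ∧ r ≤ m := by
  obtain ⟨k, s⟩ := v
  simp only [armF, mem_union, Finset.mem_filter, augF, mem_image, mem_dg hn, Finset.mem_Icc]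
  constructor
  · rintro (⟨⟨h1, h2, h3, h4⟩, h5, h6, h7⟩ | ⟨h1, h2, h3, h4⟩)
    · rw [LL_lt h1 (by omega)] at h4
      exact ⟨h6, h5, h1, by omega, by omega⟩
    · exfalso
      have hk : k ≤ n := by
        rcases h1 with h1 | ⟨x, hx, hx'⟩
        · exact h1.2.1
        · rw [Prod.mk.injEq] at hx'; omega
      have := LL_mono (n := n) (p := p) (m := m) (le_of_lt h2) hk
      omega
  · rintro ⟨h1, h2, h3, h4, h5⟩
    left
    refine ⟨⟨h3, by omega, by omega, ?_⟩, h2, h1, LL_mono (by omega) hi⟩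
    have := LL_ge (n := n) (p := p) (m := m) h3
    omega

lemma greedy_iff {n p m : ℕ} (hn : 2 ≤ n) (τ : ℕ × ℕ → ℕ) :
    GreedyRule n (LL n p m) τ ↔ ∀ r, 1 ≤ r → r + 1 ≤ m → ∀ i, 2 ≤ i → i ≤ n →
      ((τ (i, r) ≤ τ (i, r+1) ∧
          ∀ k, 2 ≤ k → k < i → τ (i, r) ≤ τ (k, r+1) → τ (i, r+1) ≤ τ (k, r+1)) ∨
        (τ (i, r+1) < τ (i, r) ∧
          ∀ k, 2 ≤ k → k < i → τ (k, r+1) < τ (i, r) ∧ τ (i, r+1) ≤ τ (k, r+1))) := by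
  unfold GreedyRule
  simp only [nx_iff, Set.forall_mem_image, Finset.mem_coe]
  constructor
  · intro h r hr1 hr2 i hi1 hi2
    have hd : (i, r+1) ∈ dgF n (LL n p m) := by
      rw [mem_dg hn]
      have := LL_ge (n := n) (p := p) (m := m) hi1
      omega
    have := h (i, r+1) hd (by simp; omega)
    simp only [dbox, Nat.add_sub_cancel] at this
    rcases this with ⟨h1, h2⟩ | ⟨h1, h2⟩
    · left
      exact ⟨h1, fun k hk1 hk2 => h2 ((mem_arm hn hi2 (k, r+1)).2 (by simp; omega))⟩
    · right
      exact ⟨h1, fun k hk1 hk2 => h2 ((mem_arm hn hi2 (k, r+1)).2 (by simp; omega))⟩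
  · rintro h ⟨i, r⟩ hd hr
    simp only at hr
    obtain ⟨r, rfl⟩ : ∃ s, r = s + 1 := ⟨r - 1, by omega⟩
    rw [mem_dg hn] at hd
    simp only [dbox, Nat.add_sub_cancel]
    by_cases hm : r + 1 ≤ m
    · rcases h r (by omega) hm i hd.1 hd.2.1 with ⟨h1, h2⟩ | ⟨h1, h2⟩
      · left
        refine ⟨h1, fun v hv => ?_⟩
        rw [mem_arm hn hd.2.1] at hv
        obtain ⟨k, s⟩ := v
        obtain ⟨rfl, h3, h4, _⟩ := hv
        exact h2 k h4 h3
      · right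
        refine ⟨h1, fun v hv => ?_⟩
        rw [mem_arm hn hd.2.1] at hv
        obtain ⟨k, s⟩ := v
        obtain ⟨rfl, h3, h4, _⟩ := hv
        exact h2 k h4 h3
    · rcases le_or_gt (τ (i, r)) (τ (i, r+1)) with h1 | h1
      · left
        refine ⟨h1, fun v hv => ?_⟩
        rw [mem_arm hn hd.2.1] at hv
        omega
      · right
        refine ⟨h1, fun v hv => ?_⟩
        rw [mem_arm hn hd.2.1] at hv
        omega

lemma ok_iff {n p m : ℕ} (hn : 2 ≤ n) (τ : ℕ × ℕ → ℕ) :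
    ((∀ u ∈ dgF n (LL n p m), ∀ v ∈ dgF n (LL n p m), Attack u v → τ u ≠ τ v) ∧
      GreedyRule n (LL n p m) τ) ↔ OK n m τ := by
  rw [greedy_iff hn]
  have hin : ∀ i r, 2 ≤ i → i ≤ n → 1 ≤ r → r ≤ m → (i, r) ∈ dgF n (LL n p m) := by
    intro i r h1 h2 h3 h4
    rw [mem_dg hn]
    have := LL_ge (n := n) (p := p) (m := m) h1
    omega
  have hlt : ∀ i r, (i, r) ∈ dgF n (LL n p m) → i < n → r ≤ m := by
    intro i r h1 h2
    rw [mem_dg hn] at h1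
    have := LL_lt (n := n) (p := p) (m := m) h1.1 h2
    omega
  constructor
  · rintro ⟨hA, hG⟩
    refine ⟨fun r h1 h2 i i' hi hii hi' => ?_, fun r h1 h2 i hi1 hi2 => ⟨?_, hG r h1 h2 i hi1 hi2⟩⟩
    · refine hA _ (hin i r hi (by omega) h1 h2) _ (hin i' r (by omega) hi' h1 h2) ⟨?_, Or.inl rfl⟩
      simp; omega
    · intro i' h3 h4
      refine hA _ (hin i (r+1) hi1 hi2 (by omega) h2) _ (hin i' r (by omega) h4 h1 (by omega))
        ⟨?_, Or.inr (Or.inl ⟨rfl, h3⟩)⟩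
      simp
  · rintro ⟨hI, hL⟩
    refine ⟨?_, fun r h1 h2 i hi1 hi2 => (hL r h1 h2 i hi1 hi2).2⟩
    have main : ∀ i r i' r', (i, r) ∈ dgF n (LL n p m) → (i', r') ∈ dgF n (LL n p m) →
        i < i' → (r = r' ∨ r = r' + 1) → τ (i, r) ≠ τ (i', r') := by
      intro i r i' r' h1 h2 h3 h4
      have h5 := (mem_dg hn).1 h1
      have h6 := (mem_dg hn).1 h2
      have h7 := hlt i r h1 (by omega)
      rcases h4 with rfl | rfl
      · exact hI r (by omega) h7 i i' (by omega) h3 (by omega)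
      · exact (hL r' (by omega) h7 i (by omega) (by omega)).1 i' h3 (by omega)
    rintro ⟨i, r⟩ hu ⟨i', r'⟩ hv ⟨hne, h⟩
    simp only [ne_eq, Prod.mk.injEq] at hne h
    rcases h with rfl | ⟨h1, h2⟩ | ⟨h1, h2⟩
    · rcases lt_trichotomy i i' with h | h | h
      · exact main _ _ _ _ hu hv h (Or.inl rfl)
      · simp [h] at hne
      · exact (main _ _ _ _ hv hu h (Or.inl rfl)).symm
    · exact main _ _ _ _ hu hv h2 (Or.inr h1)
    · exact (main _ _ _ _ hv hu h2 (Or.inr h1)).symm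

lemma ext_mem (n : ℕ) (mu : ℕ → ℕ) (f : {u // u ∈ dgF n mu} → ℕ)
    (hf : f ∈ Fintype.piFinset fun _ : {u // u ∈ dgF n mu} => Finset.Icc 1 n) :
    ext n mu f ∈ FF (dgF n mu) n := by
  rw [mem_FF]
  refine ⟨fun u hu => ?_, fun u hu => ?_⟩
  · simp only [ext, hu, dif_pos]
    simpa using Fintype.mem_piFinset.1 hf ⟨u, hu⟩
  · simp [ext, hu]

lemma ccond_iff {n p m : ℕ} (hn : 2 ≤ n) (hm : 1 ≤ m) (a k : ℕ → ℕ) (τ : ℕ × ℕ → ℕ)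
    (hv : ∀ u ∈ dgF n (LL n p m), 1 ≤ τ u ∧ τ u ≤ n) :
    CCond n (LL n p m) a k τ ↔ DCond n p m a (fun i => (k i : ℤ)) τ := by
  have hb : (∀ j, (j, 1) ∈ dgF n (LL n p m) → τ (j, 1) = a j) ↔
      ∀ i, 2 ≤ i → i ≤ n → τ (i, 1) = a i := by
    constructor
    · intro h i h1 h2
      apply h
      rw [mem_dg hn]
      have := LL_ge (n := n) (p := p) (m := m) h1
      omega
    · intro h i hi
      rw [mem_dg hn] at hi
      exact h i hi.1 hi.2.1
  unfold CCond DCond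
  rw [← ok_iff (p := p) hn, hb]
  simp only [Nat.cast_inj]
  tauto

lemma cCoef_eq {n p m : ℕ} (hn : 2 ≤ n) (hm : 1 ≤ m) (a k : ℕ → ℕ) :
    cCoef n (LL n p m) a k = DD n p m a (fun i => (k i : ℤ)) := by
  classical
  unfold cCoef DD
  refine Finset.sum_bij (fun f _ => ext n (LL n p m) f) ?_ ?_ ?_ ?_
  · intro f hf
    rw [Finset.mem_filter] at hf ⊢
    have h := ext_mem _ _ _ hf.1
    exact ⟨h, (ccond_iff hn hm a k _ ((mem_FF _ _ _).1 h).1).1 hf.2⟩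
  · intro f _ g _ h
    funext u
    have := congrFun h u.1
    simpa [ext] using this
  · intro τ hτ
    rw [Finset.mem_filter] at hτ
    have h := (mem_FF _ _ _).1 hτ.1
    have he : ext n (LL n p m) (fun u => τ u.1) = τ := by
      funext u
      by_cases hu : u ∈ dgF n (LL n p m)
      · simp [ext, hu]
      · simp [ext, hu, h.2 u hu]
    refine ⟨fun u => τ u.1, ?_, he⟩
    rw [Finset.mem_filter, he]
    refine ⟨?_, (ccond_iff hn hm a k _ h.1).2 hτ.2⟩
    rw [Fintype.mem_piFinset]
    intro u
    rw [Finset.mem_Icc]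
    exact h.1 u.1 u.2
  · intro f _
    rfl

lemma dg_sum {M : Type} [AddCommMonoid M] {n p m : ℕ} (hn : 2 ≤ n) (F : ℕ × ℕ → M) :
    ∑ u ∈ dgF n (LL n p m), F u =
      ∑ i ∈ Finset.Icc 2 n, ∑ r ∈ Finset.Icc 1 (LL n p m i), F (i, r) := by
  have hs : Finset.Icc 2 n ⊆ Finset.Icc 1 n := Finset.Icc_subset_Icc (by omega) le_rfl
  unfold dgF
  rw [Finset.sum_biUnion, ← Finset.sum_subset hs]
  · apply Finset.sum_congr rfl
    intro i _
    rw [Finset.sum_image]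
    intro x _ y _ h
    simpa using h
  · intro i h1 h2
    rw [Finset.mem_Icc] at h1 h2
    have : LL n p m i = 0 := by
      unfold LL; rw [if_neg (by omega), if_neg (by omega)]
    simp [this]
  · intro i _ i' _ h
    rw [Function.onFun, Finset.disjoint_left]
    intro u hu hu'
    simp only [mem_image] at hu hu'
    obtain ⟨_, _, rfl⟩ := hu
    obtain ⟨_, _, h3⟩ := hu'
    rw [Prod.mk.injEq] at h3
    exact h h3.1.symm

lemma sum_Icc_shift {M : Type} [AddCommMonoid M] (G : ℕ → M) (x : ℕ) :
    ∑ r ∈ Finset.Icc 1 (x+1), G r = G 1 + ∑ r ∈ Finset.Icc 1 x, G (r+1) := by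
  induction x with
  | zero => simp
  | succ x ih =>
    rw [Finset.sum_Icc_succ_top (by omega), ih, Finset.sum_Icc_succ_top (by omega), add_assoc]

lemma LL_succ {n p m i : ℕ} (hi : 2 ≤ i) : LL n p (m+1) i = LL n p m i + 1 := by
  unfold LL; split_ifs <;> omega

lemma dg_sum_succ {M : Type} [AddCommMonoid M] {n p m : ℕ} (hn : 2 ≤ n) (F : ℕ × ℕ → M) :
    ∑ u ∈ dgF n (LL n p (m+1)), F u =
      ∑ i ∈ Finset.Icc 2 n, F (i, 1) + ∑ u ∈ dgF n (LL n p m), F (u.1, u.2 + 1) := by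
  rw [dg_sum hn, dg_sum hn, ← Finset.sum_add_distrib]
  apply Finset.sum_congr rfl
  intro i hi
  rw [Finset.mem_Icc] at hi
  rw [LL_succ hi.1, sum_Icc_shift]

def cont (n : ℕ) (a : ℕ → ℕ) (i : ℕ) : ℤ := (((Finset.Icc 2 n).filter fun x => a x = i).card : ℤ)

def wt (n p m : ℕ) (a c : ℕ → ℕ) : ℕ :=
  ∑ i ∈ Finset.Icc 2 n, if c i < a i then LL n p m i else 0

open Classical in
noncomputable def tt (n p m : ℕ) (a c : ℕ → ℕ) (i : ℕ) : ℤ[X] :=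
  if Loc n a c i then (if c i < a i then X ^ (LL n p m i) else 1) else 0

noncomputable def TT (n p m : ℕ) (a c : ℕ → ℕ) : ℤ[X] := ∏ i ∈ Finset.Icc 2 n, tt n p m a c i

open Classical in
lemma TT_eq (n p m : ℕ) (a c : ℕ → ℕ) :
    TT n p m a c = if ∀ i ∈ Finset.Icc 2 n, Loc n a c i then X ^ wt n p m a c else 0 := by
  unfold TT tt wt
  rw [Finset.prod_ite_zero]
  congr 1
  rw [← Finset.prod_pow_eq_pow_sum]
  apply Finset.prod_congr rfl
  intro i _
  split_ifs <;> simp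

/-- forward shift -/
def sh (τ : ℕ × ℕ → ℕ) : ℕ × ℕ → ℕ := fun u => if u.2 = 0 then 0 else τ (u.1, u.2 + 1)

/-- inverse shift -/
def ush (a : ℕ → ℕ) (τ : ℕ × ℕ → ℕ) : ℕ × ℕ → ℕ :=
  fun u => if u.2 = 0 then 0 else if u.2 = 1 then a u.1 else τ (u.1, u.2 - 1)

def rowf (n : ℕ) (τ : ℕ × ℕ → ℕ) : ℕ → ℕ := fun i => if 2 ≤ i ∧ i ≤ n then τ (i, 1) else 0

lemma asc_ush {n p m : ℕ} (hn : 2 ≤ n) (hm : 1 ≤ m) (a : ℕ → ℕ) (τ : ℕ × ℕ → ℕ) :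
    ascStat n (LL n p (m+1)) (ush a τ) =
      wt n p m a (rowf n τ) + ascStat n (LL n p m) τ := by
  unfold ascStat
  rw [Finset.sum_filter, dg_sum_succ hn, Finset.sum_filter]
  obtain ⟨m, rfl⟩ : ∃ s, m = s + 1 := ⟨m - 1, by omega⟩
  rw [dg_sum_succ hn, dg_sum_succ hn]
  rw [Finset.sum_eq_zero (s := Finset.Icc 2 n)
    (f := fun i => if 2 ≤ ((i, 1) : ℕ × ℕ).2 ∧ ush a τ (i, 1) < ush a τ (dbox (i, 1)) then
      LL n p (m + 1 + 1) ((i, 1) : ℕ × ℕ).1 - ((i, 1) : ℕ × ℕ).2 + 1 else 0) (by intro i _; simp),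
    Finset.sum_eq_zero (s := Finset.Icc 2 n)
    (f := fun i => if 2 ≤ ((i, 1) : ℕ × ℕ).2 ∧ τ (i, 1) < τ (dbox (i, 1)) then
      LL n p (m + 1) ((i, 1) : ℕ × ℕ).1 - ((i, 1) : ℕ × ℕ).2 + 1 else 0) (by intro i _; simp),
    zero_add, zero_add]
  congr 1
  · unfold wt rowf
    apply Finset.sum_congr rfl
    intro i hi
    rw [Finset.mem_Icc] at hi
    simp [hi, LL_succ hi.1, ush, dbox]
  · apply Finset.sum_congr rfl
    rintro ⟨i, r⟩ hu
    rw [mem_dg hn] at hu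
    have h1 : LL n p (m+1+1) i - (r+1+1) + 1 = LL n p (m+1) i - (r+1) + 1 := by
      rw [LL_succ hu.1]; omega
    have h2 : r ≠ 0 := by omega
    have h3 : 1 ≤ r := by omega
    simp [h1, h2, h3, ush, dbox]

lemma card_ush {n p m : ℕ} (hn : 2 ≤ n) (a : ℕ → ℕ) (τ : ℕ × ℕ → ℕ) (i : ℕ) :
    (((dgF n (LL n p (m+1))).filter fun u => ush a τ u = i).card : ℤ) =
      cont n a i + (((dgF n (LL n p m)).filter fun u => τ u = i).card : ℤ) := by
  unfold cont
  rw [Finset.card_filter, dg_sum_succ hn, Finset.card_filter, Finset.card_filter]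
  push_cast
  congr 1
  apply Finset.sum_congr rfl
  rintro ⟨x, r⟩ hu
  rw [mem_dg hn] at hu
  have h2 : r ≠ 0 := by omega
  simp [ush, h2]

lemma ok_ush {n m : ℕ} (hm : 1 ≤ m) (a : ℕ → ℕ) (ha : Inj n a) (τ : ℕ × ℕ → ℕ) :
    OK n (m+1) (ush a τ) ↔
      ((∀ i ∈ Finset.Icc 2 n, Loc n a (rowf n τ) i) ∧ OK n m τ) := by
  have r1 : (fun x => ush a τ (x, 1)) = a := by funext x; simp [ush]
  have rs : ∀ r, 1 ≤ r → (fun x => ush a τ (x, r+1)) = fun x => τ (x, r) := by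
    intro r hr; funext x
    have : r ≠ 0 := by omega
    simp [ush, this]
  have hloc : ∀ i, 2 ≤ i → i ≤ n → (Loc n a (rowf n τ) i ↔ Loc n a (fun x => τ (x, 1)) i) := by
    intro i h1 h2
    have : ∀ k, 2 ≤ k → k ≤ i → rowf n τ k = τ (k, 1) := by
      intro k h3 h4; unfold rowf; rw [if_pos ⟨h3, by omega⟩]
    unfold Loc
    rw [this i h1 le_rfl]
    have h5 : ∀ (P : ℕ → ℕ → Prop), (∀ k, 2 ≤ k → k < i → P k (rowf n τ k)) ↔
      ∀ k, 2 ≤ k → k < i → P k (τ (k, 1)) := by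
      intro P
      constructor
      · intro h k h6 h7; rw [← this k h6 (by omega)]; exact h k h6 h7
      · intro h k h6 h7; rw [this k h6 (by omega)]; exact h k h6 h7
    rw [h5 (fun k x => a i ≤ x → τ (i, 1) ≤ x), h5 (fun k x => x < a i ∧ τ (i, 1) ≤ x)]
  unfold OK
  constructor
  · rintro ⟨h1, h2⟩
    refine ⟨fun i hi => ?_, fun r hr hr' => ?_, fun r hr hr' i hi hi' => ?_⟩
    · rw [Finset.mem_Icc] at hi
      rw [hloc i hi.1 hi.2]
      have := h2 1 le_rfl (by omega) i hi.1 hi.2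
      rwa [rs 1 le_rfl, r1] at this
    · have := h1 (r+1) (by omega) (by omega)
      rwa [rs r hr] at this
    · have := h2 (r+1) (by omega) (by omega) i hi hi'
      rwa [rs r hr, rs (r+1) (by omega)] at this
  · rintro ⟨h1, h2, h3⟩
    refine ⟨fun r hr hr' => ?_, fun r hr hr' i hi hi' => ?_⟩
    · obtain rfl | h : r = 1 ∨ 2 ≤ r := by omega
      · rwa [r1]
      · obtain ⟨r, rfl⟩ : ∃ s, r = s + 1 := ⟨r - 1, by omega⟩
        rw [rs r (by omega)]
        exact h2 r (by omega) (by omega)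
    · obtain rfl | h : r = 1 ∨ 2 ≤ r := by omega
      · rw [r1, rs 1 le_rfl, ← hloc i hi hi']
        exact h1 i (by rw [Finset.mem_Icc]; omega)
      · obtain ⟨r, rfl⟩ : ∃ s, r = s + 1 := ⟨r - 1, by omega⟩
        rw [rs r (by omega), rs (r+1) (by omega)]
        exact h3 r (by omega) (by omega) i hi hi'

lemma ush_mem {n p m : ℕ} (hn : 2 ≤ n) (a : ℕ → ℕ) (ha : a ∈ FF (Finset.Icc 2 n) n)
    (τ : ℕ × ℕ → ℕ) (h : τ ∈ FF (dgF n (LL n p m)) n) :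
    ush a τ ∈ FF (dgF n (LL n p (m+1))) n := by
  rw [mem_FF] at *
  refine ⟨?_, ?_⟩
  · rintro ⟨i, r⟩ hu
    rw [mem_dg hn] at hu
    rw [LL_succ hu.1] at hu
    by_cases hr : r = 1
    · subst hr
      simp only [ush]
      exact ha.1 i (by rw [Finset.mem_Icc]; omega)
    · have h0 : r ≠ 0 := by omega
      simp only [ush, h0, hr, if_false]
      exact h.1 (i, r-1) (by rw [mem_dg hn]; omega)
  · rintro ⟨i, r⟩ hu
    rw [mem_dg hn] at hu
    by_cases h0 : r = 0
    · simp [ush, h0]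
    by_cases hr : r = 1
    · subst hr
      simp only [ush]
      apply ha.2
      rw [Finset.mem_Icc]
      intro h3
      rw [LL_succ h3.1] at hu
      omega
    · simp only [ush, h0, hr, if_false]
      apply h.2
      rw [mem_dg hn]
      intro h3
      rw [LL_succ h3.1] at hu
      omega

lemma sh_mem {n p m : ℕ} (hn : 2 ≤ n)
    (τ : ℕ × ℕ → ℕ) (h : τ ∈ FF (dgF n (LL n p (m+1))) n) :
    sh τ ∈ FF (dgF n (LL n p m)) n := by
  rw [mem_FF] at *
  refine ⟨?_, ?_⟩
  · rintro ⟨i, r⟩ hu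
    rw [mem_dg hn] at hu
    have h0 : r ≠ 0 := by omega
    simp only [sh, h0, if_false]
    exact h.1 (i, r+1) (by rw [mem_dg hn, LL_succ hu.1]; omega)
  · rintro ⟨i, r⟩ hu
    rw [mem_dg hn] at hu
    by_cases h0 : r = 0
    · simp [sh, h0]
    simp only [sh, h0, if_false]
    apply h.2
    rw [mem_dg hn]
    intro h3
    rw [LL_succ h3.1] at h3
    omega

lemma sh_ush {n p m : ℕ} (hn : 2 ≤ n) (a : ℕ → ℕ)
    (τ : ℕ × ℕ → ℕ) (h : τ ∈ FF (dgF n (LL n p m)) n) : sh (ush a τ) = τ := by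
  rw [mem_FF] at h
  funext ⟨i, r⟩
  by_cases h0 : r = 0
  · subst h0
    simp only [sh, if_true]
    exact (h.2 _ (by rw [mem_dg hn]; omega)).symm
  · simp [sh, ush, h0]

lemma ush_sh {n p m : ℕ} (hn : 2 ≤ n) (a : ℕ → ℕ) (ha : a ∈ FF (Finset.Icc 2 n) n)
    (τ : ℕ × ℕ → ℕ) (h : τ ∈ FF (dgF n (LL n p (m+1))) n)
    (hb : ∀ i, 2 ≤ i → i ≤ n → τ (i, 1) = a i) : ush a (sh τ) = τ := by
  rw [mem_FF] at h ha
  funext ⟨i, r⟩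
  by_cases h0 : r = 0
  · subst h0
    simp only [ush, if_true]
    exact (h.2 _ (by rw [mem_dg hn]; omega)).symm
  by_cases h1 : r = 1
  · subst h1
    simp only [ush]
    by_cases hi : 2 ≤ i ∧ i ≤ n
    · exact (hb i hi.1 hi.2).symm
    · have e1 := ha.2 i (by rw [Finset.mem_Icc]; omega)
      have e2 := h.2 (i, 1) (by rw [mem_dg hn]; omega)
      simp [e1, e2]
  · have h2 : r - 1 ≠ 0 := by omega
    have h3 : r - 1 + 1 = r := by omega
    simp [sh, ush, h0, h1, h2, h3]

lemma rowf_mem {n p m : ℕ} (hn : 2 ≤ n) (hm : 1 ≤ m)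
    (τ : ℕ × ℕ → ℕ) (h : τ ∈ FF (dgF n (LL n p m)) n) : rowf n τ ∈ FF (Finset.Icc 2 n) n := by
  rw [mem_FF] at *
  refine ⟨fun i hi => ?_, fun i hi => ?_⟩
  · rw [Finset.mem_Icc] at hi
    simp only [rowf, hi, and_self, if_true]
    apply h.1
    rw [mem_dg hn]
    have := LL_ge (n := n) (p := p) (m := m) hi.1
    omega
  · rw [Finset.mem_Icc] at hi
    simp [rowf, hi]

def ECond (n p m : ℕ) (a : ℕ → ℕ) (κ : ℕ → ℤ) (τ : ℕ × ℕ → ℕ) : Prop :=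
  (∀ i ∈ Finset.Icc 2 n, Loc n a (rowf n τ) i) ∧ OK n m τ ∧ ∀ i, 1 ≤ i → i ≤ n →
          (((dgF n (LL n p m)).filter fun u => τ u = i).card : ℤ) = κ i

lemma DD_succ {n p m : ℕ} (hn : 2 ≤ n) (hm : 1 ≤ m) (a : ℕ → ℕ) (κ : ℕ → ℤ)
    (ha : a ∈ FF (Finset.Icc 2 n) n) (hinj : Inj n a) :
    DD n p (m+1) a (fun i => cont n a i + κ i) =
      ∑ c ∈ FF (Finset.Icc 2 n) n, TT n p m a c * DD n p m c κ := by
  classical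
  have hR : ∑ c ∈ FF (Finset.Icc 2 n) n, TT n p m a c * DD n p m c κ =
      ∑ τ ∈ (FF (dgF n (LL n p m)) n).filter (fun τ => ECond n p m a κ τ),
        X ^ (wt n p m a (rowf n τ) + ascStat n (LL n p m) τ) := by
    unfold DD
    simp only [Finset.sum_filter, Finset.mul_sum]
    rw [Finset.sum_comm]
    apply Finset.sum_congr rfl
    intro τ hτ
    rw [Finset.sum_eq_single (rowf n τ)]
    · rw [TT_eq]
      have : DCond n p m (rowf n τ) κ τ ↔ (OK n m τ ∧ ∀ i, 1 ≤ i → i ≤ n →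
          (((dgF n (LL n p m)).filter fun u => τ u = i).card : ℤ) = κ i) := by
        unfold DCond
        constructor
        · exact fun h => h.2
        · intro h
          refine ⟨fun i h1 h2 => by simp [rowf, h1, h2], h⟩
      rw [ite_zero_mul_ite_zero, pow_add]
      congr 1
      rw [this, ECond]
    · intro c hc hne
      rw [if_neg, mul_zero]
      intro h
      apply hne
      funext i
      by_cases hi : 2 ≤ i ∧ i ≤ n
      · rw [← h.1 i hi.1 hi.2]; simp [rowf, hi]
      · rw [mem_FF] at hc
        rw [hc.2 i (by rw [Finset.mem_Icc]; exact hi)]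
        simp only [rowf, hi, if_false]
    · intro h
      exact absurd (rowf_mem hn hm τ hτ) h
  rw [hR]
  unfold DD
  have hequiv : ∀ τ, τ ∈ FF (dgF n (LL n p m)) n →
    (DCond n p (m+1) a (fun i => cont n a i + κ i) (ush a τ) ↔
      ECond n p m a κ τ) := by
    intro τ hτ
    unfold DCond ECond
    rw [ok_ush hm a hinj]
    simp only [card_ush hn, add_right_inj]
    constructor
    · rintro ⟨_, ⟨h1, h2⟩, h3⟩; exact ⟨h1, h2, h3⟩
    · rintro ⟨h1, h2, h3⟩
      exact ⟨fun i _ _ => by simp [ush], ⟨h1, h2⟩, h3⟩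
  refine Finset.sum_nbij' sh (ush a) ?_ ?_ ?_ ?_ ?_
  · intro τ hτ
    rw [Finset.mem_filter] at hτ ⊢
    have h1 := sh_mem hn τ hτ.1
    refine ⟨h1, (hequiv _ h1).1 ?_⟩
    rw [ush_sh hn a ha τ hτ.1 hτ.2.1]
    exact hτ.2
  · intro τ hτ
    rw [Finset.mem_filter] at hτ ⊢
    exact ⟨ush_mem hn a ha τ hτ.1, (hequiv _ hτ.1).2 hτ.2⟩
  · intro τ hτ
    rw [Finset.mem_filter] at hτ
    exact ush_sh hn a ha τ hτ.1 hτ.2.1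
  · intro τ hτ
    rw [Finset.mem_filter] at hτ
    exact sh_ush hn a τ hτ.1
  · intro τ hτ
    rw [Finset.mem_filter] at hτ
    rw [← asc_ush hn hm, ush_sh hn a ha τ hτ.1 hτ.2.1]

/-- swap of columns -/
def sf (i x : ℕ) : ℕ := if x = i then i + 1 else if x = i + 1 then i else x

lemma sf_sf (i x : ℕ) : sf i (sf i x) = x := by unfold sf; split_ifs <;> omega

lemma inj_iff (n : ℕ) (c : ℕ → ℕ) :
    Inj n c ↔ ∀ i i', 2 ≤ i → i ≤ n → 2 ≤ i' → i' ≤ n → c i = c i' → i = i' := by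
  constructor
  · intro h i i' h1 h2 h3 h4 h5
    rcases lt_trichotomy i i' with h6 | h6 | h6
    · exact absurd h5 (h i i' h1 h6 h4)
    · exact h6
    · exact absurd h5.symm (h i' i h3 h6 h2)
  · intro h i i' h1 h2 h3 h4
    have := h i i' h1 (by omega) (by omega) h3 h4
    omega

lemma sf_range {n i x : ℕ} (hi : 2 ≤ i) (hi' : i + 1 < n) :
    (2 ≤ sf i x ∧ sf i x ≤ n) ↔ (2 ≤ x ∧ x ≤ n) := by
  unfold sf; split_ifs <;> omega

lemma inj_sf {n i : ℕ} (hi : 2 ≤ i) (hi' : i + 1 < n) {c : ℕ → ℕ} (h : Inj n c) :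
    Inj n (fun x => c (sf i x)) := by
  rw [inj_iff] at *
  intro x y h1 h2 h3 h4 h5
  have hx := (sf_range (x := x) hi hi').2 ⟨h1, h2⟩
  have hy := (sf_range (x := y) hi hi').2 ⟨h3, h4⟩
  have := h _ _ hx.1 hx.2 hy.1 hy.2 h5
  rw [← sf_sf i x, this, sf_sf]

lemma sf_mem {n i : ℕ} (hi : 2 ≤ i) (hi' : i + 1 < n) {c : ℕ → ℕ}
    (h : c ∈ FF (Finset.Icc 2 n) n) : (fun x => c (sf i x)) ∈ FF (Finset.Icc 2 n) n := by
  rw [mem_FF] at *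
  simp only [Finset.mem_Icc] at *
  refine ⟨fun u hu => h.1 _ ((sf_range hi hi').2 hu), fun u hu => h.2 _ ?_⟩
  rw [sf_range hi hi']; exact hu

lemma LL_sf {n p m i x : ℕ} (hi : 2 ≤ i) (hi' : i + 1 < n) : LL n p m (sf i x) = LL n p m x := by
  unfold LL sf; split_ifs <;> omega

lemma cont_sf {n i : ℕ} (hi : 2 ≤ i) (hi' : i + 1 < n) (a : ℕ → ℕ) :
    cont n (fun x => a (sf i x)) = cont n a := by
  funext z
  unfold cont
  congr 1
  refine Finset.card_nbij' (sf i) (sf i) ?_ ?_ ?_ ?_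
  · intro x hx
    simp only [Finset.coe_filter, Finset.mem_Icc, Set.mem_ofPred_eq] at hx ⊢
    exact ⟨(sf_range hi hi').2 hx.1, hx.2⟩
  · intro x hx
    simp only [Finset.coe_filter, Finset.mem_Icc, Set.mem_ofPred_eq] at hx ⊢
    refine ⟨(sf_range hi hi').2 hx.1, ?_⟩
    rw [sf_sf]; exact hx.2
  · intro x _; exact sf_sf i x
  · intro x _; exact sf_sf i x

lemma DD_zero {n p m : ℕ} (hm : 1 ≤ m) (a : ℕ → ℕ) (κ : ℕ → ℤ) (h : ¬ Inj n a) :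
    DD n p m a κ = 0 := by
  classical
  unfold DD
  apply Finset.sum_eq_zero
  intro τ hτ
  exfalso
  rw [Finset.mem_filter] at hτ
  obtain ⟨_, h1, ⟨h2, _⟩, _⟩ := hτ
  apply h
  intro x y hx hxy hy
  have := h2 1 le_rfl hm x y hx hxy hy
  simp only at this
  rwa [h1 x hx (by omega), h1 y (by omega) hy] at this

lemma dg_sf {n p m i : ℕ} (hi : 2 ≤ i) (hi' : i + 1 < n) (u : ℕ × ℕ) :
    (sf i u.1, u.2) ∈ dgF n (LL n p m) ↔ u ∈ dgF n (LL n p m) := by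
  obtain ⟨x, r⟩ := u
  rw [mem_dg (by omega), mem_dg (by omega), LL_sf hi hi']
  have := sf_range (n := n) (x := x) hi hi'
  tauto

lemma dg_sum_sf {M : Type} [AddCommMonoid M] {n p m i : ℕ} (hi : 2 ≤ i) (hi' : i + 1 < n)
    (F : ℕ × ℕ → M) :
    ∑ u ∈ dgF n (LL n p m), F u = ∑ u ∈ dgF n (LL n p m), F (sf i u.1, u.2) := by
  refine Finset.sum_nbij' (fun u => (sf i u.1, u.2)) (fun u => (sf i u.1, u.2)) ?_ ?_ ?_ ?_ ?_
  · intro u hu; exact (dg_sf hi hi' u).2 hu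
  · intro u hu; exact (dg_sf hi hi' u).2 hu
  · intro u _; simp [sf_sf]
  · intro u _; simp [sf_sf]
  · intro u _; simp [sf_sf]

lemma DD_one_sym {n p i : ℕ} (hi : 2 ≤ i) (hi' : i + 1 < n) (a : ℕ → ℕ) (κ : ℕ → ℤ) :
    DD n p 1 a κ = DD n p 1 (fun x => a (sf i x)) κ := by
  classical
  have hn : 2 ≤ n := by omega
  have key : ∀ (a : ℕ → ℕ) (τ : ℕ × ℕ → ℕ),
      τ ∈ (FF (dgF n (LL n p 1)) n).filter (fun τ => DCond n p 1 a κ τ) →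
      (fun u : ℕ × ℕ => τ (sf i u.1, u.2)) ∈
        (FF (dgF n (LL n p 1)) n).filter (fun τ => DCond n p 1 (fun x => a (sf i x)) κ τ) := by
    intro a τ hτ
    rw [Finset.mem_filter, mem_FF] at hτ ⊢
    obtain ⟨⟨h1, h2⟩, h3, ⟨h4, _⟩, h5⟩ := hτ
    refine ⟨⟨fun u hu => h1 _ ((dg_sf hi hi' u).2 hu), fun u hu => h2 _ ?_⟩, ?_, ⟨?_, ?_⟩, ?_⟩
    · rw [dg_sf hi hi']; exact hu
    · intro x hx hx'
      have := (sf_range (n := n) (x := x) hi hi').2 ⟨hx, hx'⟩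
      exact h3 _ this.1 this.2
    · intro r hr hr'
      exact inj_sf hi hi' (h4 r hr hr')
    · intro r hr hr'; omega
    · intro z hz hz'
      rw [← h5 z hz hz', Finset.card_filter, Finset.card_filter,
        dg_sum_sf hi hi' (fun u => if τ u = z then 1 else 0)]
  unfold DD
  refine Finset.sum_nbij' (fun τ u => τ (sf i u.1, u.2)) (fun τ u => τ (sf i u.1, u.2)) ?_ ?_ ?_ ?_ ?_
  · intro τ hτ; exact key a τ hτ
  · intro τ hτ
    have := key _ τ hτ
    simp only [sf_sf] at this
    exact this
  · intro τ _; simp [sf_sf]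
  · intro τ _; simp [sf_sf]
  · intro τ _
    congr 1
    unfold ascStat
    rw [Finset.sum_filter, Finset.sum_filter, dg_sum_sf hi hi']
    apply Finset.sum_congr rfl
    intro u _
    simp only [LL_sf hi hi']
    rfl

def Nx (P : ℕ → Prop) (x u : ℕ) : Prop :=
  (x ≤ u ∧ ∀ z, P z → x ≤ z → u ≤ z) ∨ (u < x ∧ ∀ z, P z → z < x ∧ u ≤ z)

open Classical in
noncomputable def gg (P Q : ℕ → Prop) (W : ℤ[X]) (x y u v : ℕ) : ℤ[X] :=
  (if u ≠ y ∧ ¬ Q u ∧ Nx P x u then (if u < x then W else 1) else 0) *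
    (if ¬ Q v ∧ Nx (fun z => P z ∨ z = u) y v then (if v < y then W else 1) else 0)

lemma gg_core (P Q : ℕ → Prop) (W : ℤ[X]) (x y h : ℕ) (hxy : x ≠ y) (hh : h ≠ x)
    (hx : ¬ Q x) (hy : ¬ Q y) (hPx : ¬ P x) (hPy : ¬ P y) (hPh : ¬ P h) :
    gg P Q W x y x h + gg P Q W x y h x = gg P Q W y x x h + gg P Q W y x h x := by
  classical
  have refl : ∀ (P : ℕ → Prop) x, Nx P x x := fun P x => Or.inl ⟨le_rfl, fun z _ h => h⟩
  by_cases hhy : h = y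
  · subst hhy
    simp [gg, refl, hx, hy, hh, hxy]
  by_cases hQ : Q h
  · simp [gg, hQ]
  have e3 : gg P Q W y x x h = 0 := by simp [gg]
  have e1 : gg P Q W x y x h =
      if Nx (fun z => P z ∨ z = x) y h then (if h < y then W else 1) else 0 := by
    simp [gg, hx, hxy, refl, hQ]
  have e4 : gg P Q W y x h x = if Nx P y h then (if h < y then W else 1) else 0 := by
    simp [gg, hx, hh, refl, hQ]
  have e2 : gg P Q W x y h x = if Nx P x h ∧ Nx (fun z => P z ∨ z = h) y x then
      (if h < x then W else 1) * (if x < y then W else 1) else 0 := by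
    simp only [gg, ne_eq, hhy, not_false_eq_true, hQ, true_and, hx, ite_zero_mul_ite_zero]
  rw [e1, e2, e3, e4, zero_add]
  by_cases hA : Nx P y h
  · rw [if_pos hA]
    by_cases hB : Nx (fun z => P z ∨ z = x) y h
    · have hC : ¬ (Nx P x h ∧ Nx (fun z => P z ∨ z = h) y x) := by
        rintro ⟨_, hC⟩
        unfold Nx at *
        rcases hB with ⟨b1, b2⟩ | ⟨b1, b2⟩
        · have := b2 x (Or.inr rfl)
          rcases hC with ⟨c1, c2⟩ | ⟨c1, c2⟩
          · have := c2 h (Or.inr rfl); omega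
          · have := c2 h (Or.inr rfl); omega
        · have := b2 x (Or.inr rfl)
          rcases hC with ⟨c1, c2⟩ | ⟨c1, c2⟩
          · omega
          · have := c2 h (Or.inr rfl); omega
      rw [if_pos hB, if_neg hC, add_zero]
    · rw [if_neg hB, zero_add]
      have hC : (Nx P x h ∧ Nx (fun z => P z ∨ z = h) y x) ∧
          ((y < x ∧ x < h) ∨ (x < h ∧ h < y) ∨ (h < y ∧ y < x)) := by
        unfold Nx at *
        rcases hA with ⟨a1, a2⟩ | ⟨a1, a2⟩
        · have hx' : y < x ∧ x < h := by
            by_contra hc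
            apply hB
            left
            refine ⟨a1, ?_⟩
            rintro z (hz | rfl) hz'
            · exact a2 z hz hz'
            · omega
          refine ⟨⟨Or.inl ⟨by omega, fun z hz hz' => a2 z hz (by omega)⟩, Or.inl ⟨by omega, ?_⟩⟩,
            Or.inl hx'⟩
          rintro z (hz | rfl) hz'
          · have := a2 z hz hz'; omega
          · omega
        · have hx' : x < h ∨ y < x := by
            by_contra hc
            apply hB
            right
            refine ⟨a1, ?_⟩
            rintro z (hz | rfl)
            · exact a2 z hz
            · omega
          rcases hx' with hx' | hx'
          · refine ⟨⟨Or.inl ⟨by omega, fun z hz hz' => (a2 z hz).2⟩, Or.inr ⟨by omega, ?_⟩⟩,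
              Or.inr (Or.inl ⟨hx', a1⟩)⟩
            rintro z (hz | rfl)
            · have := a2 z hz; omega
            · omega
          · refine ⟨⟨Or.inr ⟨by omega, fun z hz => ?_⟩, Or.inl ⟨by omega, ?_⟩⟩,
              Or.inr (Or.inr ⟨a1, hx'⟩)⟩
            · have := a2 z hz; omega
            · rintro z (hz | rfl)
              · have := a2 z hz; omega
              · omega
      rw [if_pos hC.1]
      rcases hC.2 with ⟨h1, h2⟩ | ⟨h1, h2⟩ | ⟨h1, h2⟩
      · rw [if_neg (by omega), if_neg (by omega), if_neg (by omega), one_mul]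
      · rw [if_neg (by omega), if_pos (by omega), if_pos (by omega), one_mul]
      · rw [if_pos (by omega), if_neg (by omega), if_pos (by omega), mul_one]
  · have hB : ¬ Nx (fun z => P z ∨ z = x) y h := by
      intro hB
      apply hA
      unfold Nx at *
      rcases hB with ⟨b1, b2⟩ | ⟨b1, b2⟩
      · exact Or.inl ⟨b1, fun z hz => b2 z (Or.inl hz)⟩
      · exact Or.inr ⟨b1, fun z hz => b2 z (Or.inl hz)⟩
    have hC : ¬ (Nx P x h ∧ Nx (fun z => P z ∨ z = h) y x) := by
      rintro ⟨hC, hD⟩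
      apply hA
      unfold Nx at *
      rcases hD with ⟨d1, d2⟩ | ⟨d1, d2⟩
      · have d3 := d2 h (Or.inr rfl)
        rcases hC with ⟨c1, c2⟩ | ⟨c1, c2⟩
        · refine Or.inl ⟨by omega, fun z hz hz' => ?_⟩
          have := d2 z (Or.inl hz) hz'
          exact c2 z hz this
        · refine Or.inr ⟨by omega, fun z hz => ?_⟩
          have := d2 z (Or.inl hz)
          have := c2 z hz
          omega
      · have d3 := d2 h (Or.inr rfl)
        rcases hC with ⟨c1, c2⟩ | ⟨c1, c2⟩
        · refine Or.inr ⟨by omega, fun z hz => ?_⟩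
          have := d2 z (Or.inl hz)
          have := c2 z hz
          omega
        · omega
    rw [if_neg hA, if_neg hB, if_neg hC, add_zero]

lemma gg_sym (P Q : ℕ → Prop) (W : ℤ[X]) (x y u v : ℕ) (hxy : x ≠ y) (huv : u ≠ v)
    (hx : ¬ Q x) (hy : ¬ Q y) (hPx : ¬ P x) (hPy : ¬ P y) (hPu : ¬ P u) (hPv : ¬ P v)
    (H : Q u ∨ Q v ∨ u = x ∨ u = y ∨ v = x ∨ v = y) :
    gg P Q W x y u v + gg P Q W x y v u = gg P Q W y x u v + gg P Q W y x v u := by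
  rcases H with h | h | rfl | rfl | rfl | rfl
  · simp [gg, h]
  · simp [gg, h]
  · exact gg_core P Q W u y v hxy huv.symm hx hy hPx hPy hPv
  · exact (gg_core P Q W u x v hxy.symm huv.symm hy hx hPy hPx hPv).symm
  · rw [add_comm, gg_core P Q W v y u hxy huv hx hy hPx hPy hPu, add_comm]
  · rw [add_comm, ← gg_core P Q W v x u hxy.symm huv hy hx hPy hPx hPu, add_comm]

lemma loc_sf_a {n i k : ℕ} (hi' : i + 1 < n) (hk : k ≠ i) (hk' : k ≠ i + 1)
    (a c : ℕ → ℕ) : Loc n (fun x => a (sf i x)) c k ↔ Loc n a c k := by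
  have h1 : sf i k = k := by unfold sf; rw [if_neg hk, if_neg hk']
  have hr : ∀ x, (k < sf i x ∧ sf i x ≤ n) ↔ (k < x ∧ x ≤ n) := by
    intro x; unfold sf; split_ifs <;> omega
  unfold Loc
  simp only [h1]
  have : (∀ i', k < i' → i' ≤ n → c k ≠ a (sf i i')) ↔ ∀ i', k < i' → i' ≤ n → c k ≠ a i' := by
    constructor
    · intro h x hx hx'
      have h2 := (hr x).2 ⟨hx, hx'⟩
      have := h _ h2.1 h2.2
      rwa [sf_sf] at this
    · intro h x hx hx'
      have h2 := (hr x).2 ⟨hx, hx'⟩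
      exact h _ h2.1 h2.2
  rw [this]

lemma loc_sf_c {n i k : ℕ} (hi : 2 ≤ i) (hk : k ≠ i) (hk' : k ≠ i + 1)
    (a c : ℕ → ℕ) : Loc n a (fun x => c (sf i x)) k ↔ Loc n a c k := by
  have h1 : sf i k = k := by unfold sf; rw [if_neg hk, if_neg hk']
  have hr : ∀ x, (2 ≤ sf i x ∧ sf i x < k) ↔ (2 ≤ x ∧ x < k) := by
    intro x; unfold sf; split_ifs <;> omega
  unfold Loc
  simp only [h1]
  have : ∀ (G : ℕ → Prop), (∀ x, 2 ≤ x → x < k → G (c (sf i x))) ↔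
      ∀ x, 2 ≤ x → x < k → G (c x) := by
    intro G
    constructor
    · intro h x hx hx'
      have h2 := (hr x).2 ⟨hx, hx'⟩
      have := h _ h2.1 h2.2
      rwa [sf_sf] at this
    · intro h x hx hx'
      have h2 := (hr x).2 ⟨hx, hx'⟩
      exact h _ h2.1 h2.2
  rw [this (fun z => a k ≤ z → c k ≤ z), this (fun z => z < a k ∧ c k ≤ z)]

/-- product of the factors away from columns `i`, `i+1` -/
noncomputable def RR (n p m i : ℕ) (a c : ℕ → ℕ) : ℤ[X] :=
  ∏ k ∈ (Finset.Icc 2 n).filter (fun k => k ≠ i ∧ k ≠ i + 1), tt n p m a c k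

lemma TT_split {n p m i : ℕ} (hi : 2 ≤ i) (hi' : i + 1 < n) (a c : ℕ → ℕ) :
    TT n p m a c = RR n p m i a c * (tt n p m a c i * tt n p m a c (i+1)) := by
  unfold TT RR
  rw [← Finset.prod_filter_mul_prod_filter_not (Finset.Icc 2 n) (fun k => k ≠ i ∧ k ≠ i + 1)]
  congr 1
  have : (Finset.Icc 2 n).filter (fun k => ¬ (k ≠ i ∧ k ≠ i + 1)) = {i, i+1} := by
    ext x
    simp only [Finset.mem_filter, Finset.mem_Icc, Finset.mem_insert, Finset.mem_singleton]
    omega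
  rw [this, Finset.prod_pair (by omega)]

lemma RR_sf_a {n p m i : ℕ} (hi' : i + 1 < n) (a c : ℕ → ℕ) :
    RR n p m i (fun x => a (sf i x)) c = RR n p m i a c := by
  classical
  unfold RR
  apply Finset.prod_congr rfl
  intro k hk
  rw [Finset.mem_filter] at hk
  have h1 : sf i k = k := by unfold sf; rw [if_neg hk.2.1, if_neg hk.2.2]
  unfold tt
  simp only [loc_sf_a hi' hk.2.1 hk.2.2, h1]

lemma RR_sf_c {n p m i : ℕ} (hi : 2 ≤ i) (a c : ℕ → ℕ) :
    RR n p m i a (fun x => c (sf i x)) = RR n p m i a c := by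
  classical
  unfold RR
  apply Finset.prod_congr rfl
  intro k hk
  rw [Finset.mem_filter] at hk
  have h1 : sf i k = k := by unfold sf; rw [if_neg hk.2.1, if_neg hk.2.2]
  unfold tt
  simp only [loc_sf_c hi hk.2.1 hk.2.2, h1]

lemma tt_gg {n p m i : ℕ} (hi : 2 ≤ i) (hi' : i + 1 < n) (a c : ℕ → ℕ) :
    tt n p m a c i * tt n p m a c (i+1) =
      gg (fun z => ∃ k, 2 ≤ k ∧ k < i ∧ c k = z) (fun z => ∃ k, i + 1 < k ∧ k ≤ n ∧ a k = z)
        (X ^ m) (a i) (a (i+1)) (c i) (c (i+1)) := by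
  classical
  have e1 : Loc n a c i ↔ (c i ≠ a (i+1) ∧ ¬ (∃ k, i + 1 < k ∧ k ≤ n ∧ a k = c i) ∧
      Nx (fun z => ∃ k, 2 ≤ k ∧ k < i ∧ c k = z) (a i) (c i)) := by
    have q1 : (∀ i', i < i' → i' ≤ n → c i ≠ a i') ↔
        (c i ≠ a (i+1) ∧ ¬ (∃ k, i + 1 < k ∧ k ≤ n ∧ a k = c i)) := by
      constructor
      · intro h
        refine ⟨h _ (by omega) (by omega), ?_⟩
        rintro ⟨k, h1, h2, h3⟩
        exact h k (by omega) h2 h3.symm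
      · rintro ⟨h1, h2⟩ k hk hk' h3
        by_cases h4 : k = i + 1
        · rw [h4] at h3; exact h1 h3
        · exact h2 ⟨k, by omega, hk', h3.symm⟩
    unfold Loc Nx
    rw [q1, and_assoc]
    simp only [forall_exists_index, and_imp, forall_apply_eq_imp_iff₂]
    grind
  have e2 : Loc n a c (i+1) ↔ (¬ (∃ k, i + 1 < k ∧ k ≤ n ∧ a k = c (i+1)) ∧
      Nx (fun z => (∃ k, 2 ≤ k ∧ k < i ∧ c k = z) ∨ z = c i) (a (i+1)) (c (i+1))) := by
    have q1 : (∀ i', i + 1 < i' → i' ≤ n → c (i+1) ≠ a i') ↔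
        (¬ (∃ k, i + 1 < k ∧ k ≤ n ∧ a k = c (i+1))) := by
      constructor
      · rintro h ⟨k, h1, h2, h3⟩
        exact h k (by omega) h2 h3.symm
      · intro h2 k hk hk' h3
        exact h2 ⟨k, by omega, hk', h3.symm⟩
    have q2 : ∀ (G : ℕ → Prop), (∀ k, 2 ≤ k → k < i + 1 → G (c k)) ↔
        ∀ z, ((∃ k, 2 ≤ k ∧ k < i ∧ c k = z) ∨ z = c i) → G z := by
      intro G
      constructor
      · rintro h z (⟨k, h1, h2, rfl⟩ | rfl)
        · exact h k h1 (by omega)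
        · exact h i hi (by omega)
      · intro h k h1 h2
        apply h
        by_cases h3 : k = i
        · right; rw [h3]
        · left; exact ⟨k, h1, by omega, rfl⟩
    unfold Loc Nx
    rw [q1, q2 (fun z => a (i+1) ≤ z → c (i+1) ≤ z), q2 (fun z => z < a (i+1) ∧ c (i+1) ≤ z)]
  unfold tt gg
  rw [LL_lt hi (by omega), LL_lt (by omega) hi']
  simp only [e1, e2]

lemma sf_left (i : ℕ) : sf i i = i + 1 := by simp [sf]
lemma sf_right (i : ℕ) : sf i (i+1) = i := by simp [sf]

lemma pigeon {n : ℕ} (g : ℕ → ℕ) (h : ∀ x, x ≤ n → 1 ≤ g x ∧ g x ≤ n) :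
    ∃ x y, x < y ∧ y ≤ n ∧ g x = g y := by
  obtain ⟨x, hx, y, hy, hne, he⟩ := Finset.exists_ne_map_eq_of_card_lt_of_maps_to
    (s := Finset.Icc 0 n) (t := Finset.Icc 1 n) (f := g) (by simp)
    (by intro x hx; simp only [Finset.coe_Icc, Set.mem_Icc] at hx ⊢; exact h x hx.2)
  rw [Finset.mem_Icc] at hx hy
  rcases lt_or_gt_of_ne hne with h1 | h1
  · exact ⟨x, y, h1, hy.2, he⟩
  · exact ⟨y, x, h1, hx.2, he.symm⟩

lemma TT_sym {n p m i : ℕ} (hi : 2 ≤ i) (hi' : i + 1 < n) (a c : ℕ → ℕ)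
    (ha : a ∈ FF (Finset.Icc 2 n) n) (hai : Inj n a)
    (hc : c ∈ FF (Finset.Icc 2 n) n) (hci : Inj n c) :
    TT n p m a c + TT n p m a (fun x => c (sf i x)) =
      TT n p m (fun x => a (sf i x)) c + TT n p m (fun x => a (sf i x)) (fun x => c (sf i x)) := by
  classical
  rw [mem_FF] at ha hc
  simp only [Finset.mem_Icc] at ha hc
  simp only [TT_split hi hi', RR_sf_a hi', RR_sf_c hi, tt_gg hi hi', ← mul_add]
  by_cases hR : RR n p m i a c = 0
  · rw [hR, zero_mul, zero_mul]
  congr 1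
  have hL : ∀ k, 2 ≤ k → k < i → ∀ k', k < k' → k' ≤ n → c k ≠ a k' := by
    intro k h1 h2 k' h3 h4 h5
    apply hR
    unfold RR
    apply Finset.prod_eq_zero (i := k)
    · rw [Finset.mem_filter, Finset.mem_Icc]; omega
    · unfold tt
      rw [if_neg]
      intro h
      exact h.1 k' h3 h4 h5
  have eP : (fun z => ∃ k, 2 ≤ k ∧ k < i ∧ c (sf i k) = z) =
      fun z => ∃ k, 2 ≤ k ∧ k < i ∧ c k = z := by
    funext z
    apply propext
    apply exists_congr
    intro k
    apply and_congr_right; intro _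
    apply and_congr_right; intro h2
    have : sf i k = k := by unfold sf; split_ifs <;> omega
    rw [this]
  have eQ : (fun z => ∃ k, i + 1 < k ∧ k ≤ n ∧ a (sf i k) = z) =
      fun z => ∃ k, i + 1 < k ∧ k ≤ n ∧ a k = z := by
    funext z
    apply propext
    apply exists_congr
    intro k
    apply and_congr_right; intro h2
    have : sf i k = k := by unfold sf; split_ifs <;> omega
    rw [this]
  simp only [eP, eQ, sf_left, sf_right]
  apply gg_sym
  · exact hai i (i+1) hi (by omega) (by omega)
  · exact hci i (i+1) hi (by omega) (by omega)
  · rintro ⟨k, h1, h2, h3⟩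
    exact hai i k hi (by omega) h2 h3.symm
  · rintro ⟨k, h1, h2, h3⟩
    exact hai (i+1) k (by omega) (by omega) h2 h3.symm
  · rintro ⟨k, h1, h2, h3⟩
    exact hL k h1 h2 i h2 (by omega) h3
  · rintro ⟨k, h1, h2, h3⟩
    exact hL k h1 h2 (i+1) (by omega) (by omega) h3
  · rintro ⟨k, h1, h2, h3⟩
    exact hci k i h1 h2 (by omega) h3
  · rintro ⟨k, h1, h2, h3⟩
    exact hci k (i+1) h1 (by omega) (by omega) h3
  · by_contra hcon
    push Not at hcon
    obtain ⟨n1, n2, n3, n4, n5, n6⟩ := hcon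
    obtain ⟨x, y, hxy, hy, he⟩ := pigeon (n := n)
      (fun k => if k = 0 then c i else if k = 1 then c (i+1) else if k < i then c k else a k) (by
        intro x hx
        split_ifs
        · exact hc.1 _ (by omega)
        · exact hc.1 _ (by omega)
        · exact hc.1 _ (by omega)
        · exact ha.1 _ (by omega))
    have y0 : y ≠ 0 := by omega
    rw [if_neg y0] at he
    have hA : ∀ k, i ≤ k → k ≤ n → c i ≠ a k := by
      intro k h1 h2 h3
      rcases (by omega : k = i ∨ k = i + 1 ∨ i + 1 < k) with rfl | rfl | h
      · exact n3 h3
      · exact n4 h3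
      · exact n1 k h h2 h3.symm
    have hB : ∀ k, i ≤ k → k ≤ n → c (i+1) ≠ a k := by
      intro k h1 h2 h3
      rcases (by omega : k = i ∨ k = i + 1 ∨ i + 1 < k) with rfl | rfl | h
      · exact n5 h3
      · exact n6 h3
      · exact n2 k h h2 h3.symm
    by_cases x0 : x = 0
    · rw [if_pos x0] at he
      split_ifs at he with h1 h2
      · exact hci i (i+1) hi (by omega) (by omega) he
      · exact hci y i (by omega) h2 (by omega) he.symm
      · exact hA y (by omega) hy he
    rw [if_neg x0, if_neg (by omega : y ≠ 1)] at he
    by_cases x1 : x = 1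
    · rw [if_pos x1] at he
      split_ifs at he with h2
      · exact hci y (i+1) (by omega) (by omega) (by omega) he.symm
      · exact hB y (by omega) hy he
    rw [if_neg x1] at he
    split_ifs at he with h1 h2 h2
    · exact hci x y (by omega) hxy hy he
    · exact hL x (by omega) h1 y hxy hy he
    · omega
    · exact hai x y (by omega) hxy hy he

lemma DD_sym {n p m i : ℕ} (hi : 2 ≤ i) (hi' : i + 1 < n) (hm : 1 ≤ m) :
    ∀ (a : ℕ → ℕ) (κ : ℕ → ℤ), a ∈ FF (Finset.Icc 2 n) n →
      DD n p m a κ = DD n p m (fun x => a (sf i x)) κ := by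
  induction m, hm using Nat.le_induction with
  | base => intro a κ _; exact DD_one_sym hi hi' a κ
  | succ m hm ih =>
    intro a κ ha
    by_cases hai : Inj n a
    swap
    · rw [DD_zero (by omega) _ _ hai, DD_zero (by omega)]
      intro h
      apply hai
      have := inj_sf hi hi' h
      simp only [sf_sf] at this
      exact this
    obtain ⟨κ', rfl⟩ : ∃ κ', κ = fun i => cont n a i + κ' i :=
      ⟨fun i => κ i - cont n a i, by funext i; ring⟩
    have h1 := DD_succ (p := p) (by omega) hm a κ' ha hai
    have h2 := DD_succ (p := p) (by omega) hm _ κ' (sf_mem hi hi' ha) (inj_sf hi hi' hai)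
    rw [cont_sf hi hi'] at h2
    rw [h1, h2]
    have hre : ∀ b : ℕ → ℕ, ∑ c ∈ FF (Finset.Icc 2 n) n, TT n p m b c * DD n p m c κ' =
        ∑ c ∈ FF (Finset.Icc 2 n) n, TT n p m b (fun x => c (sf i x)) * DD n p m c κ' := by
      intro b
      refine Finset.sum_nbij' (fun c x => c (sf i x)) (fun c x => c (sf i x)) ?_ ?_ ?_ ?_ ?_
      · intro c hc; exact sf_mem hi hi' hc
      · intro c hc; exact sf_mem hi hi' hc
      · intro c _; simp [sf_sf]
      · intro c _; simp [sf_sf]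
      · intro c hc
        simp only [sf_sf]
        rw [← ih c κ' hc]
    have hdouble : ∀ A B : ℤ[X], A + A = B + B → A = B := by
      intro A B h
      rw [← two_mul, ← two_mul] at h
      exact mul_left_cancel₀ two_ne_zero h
    apply hdouble
    nth_rewrite 2 [hre a]
    nth_rewrite 2 [hre (fun x => a (sf i x))]
    rw [← Finset.sum_add_distrib, ← Finset.sum_add_distrib]
    apply Finset.sum_congr rfl
    intro c hc
    by_cases hci : Inj n c
    · rw [← add_mul, ← add_mul, TT_sym hi hi' a c ha hai hc hci]
    · rw [DD_zero hm _ _ hci]; ring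

lemma diff_base {n p m j : ℕ} (hn : 3 ≤ n) (hm : 1 ≤ m) (hj1 : 1 ≤ j) (hj2 : j + 1 ≤ n)
    (a a' : ℕ → ℕ) (κ : ℕ → ℤ)
    (ha : a ∈ FF (Finset.Icc 2 n) n) (hai : Inj n a)
    (ha' : a' ∈ FF (Finset.Icc 2 n) n) (hai' : Inj n a')
    (h1 : a 2 = j + 1) (h2 : a' 2 = j) (h3 : ∀ k, k ≠ 2 → a k = a' k) :
    DD n p (m+1) a (fun i => cont n a i + κ i) =
      DD n p (m+1) a' (fun i => cont n a' i + κ i) - (1 - X ^ m) * DD n p m a' κ := by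
  classical
  rw [DD_succ (by omega) hm a κ ha hai, DD_succ (by omega) hm a' κ ha' hai']
  have hsum : (1 - X ^ m) * DD n p m a' κ = ∑ c ∈ FF (Finset.Icc 2 n) n,
      (if c = a' then (1 - X ^ m : ℤ[X]) else 0) * DD n p m c κ := by
    rw [Finset.sum_eq_single a']
    · simp
    · intro c _ hne; simp [hne]
    · intro h; exact absurd ha' h
  rw [hsum, ← Finset.sum_sub_distrib]
  apply Finset.sum_congr rfl
  intro c hc
  by_cases hci : Inj n c
  swap
  · rw [DD_zero hm _ _ hci]; ring
  rw [← sub_mul]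
  congr 1
  have hIcc : Finset.Icc 2 n = insert 2 (Finset.Icc 3 n) := by
    ext x; simp only [Finset.mem_Icc, Finset.mem_insert]; omega
  have hnot : 2 ∉ Finset.Icc 3 n := by simp
  unfold TT
  rw [hIcc, Finset.prod_insert hnot, Finset.prod_insert hnot]
  have hrest : ∏ k ∈ Finset.Icc 3 n, tt n p m a c k = ∏ k ∈ Finset.Icc 3 n, tt n p m a' c k := by
    apply Finset.prod_congr rfl
    intro k hk
    rw [Finset.mem_Icc] at hk
    have hl : Loc n a c k ↔ Loc n a' c k := by
      unfold Loc
      rw [h3 k (by omega)]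
      have : (∀ i', k < i' → i' ≤ n → c k ≠ a i') ↔ (∀ i', k < i' → i' ≤ n → c k ≠ a' i') := by
        constructor
        · intro h i h4 h5; rw [← h3 i (by omega)]; exact h i h4 h5
        · intro h i h4 h5; rw [h3 i (by omega)]; exact h i h4 h5
      rw [this]
    unfold tt
    simp only [hl, h3 k (by omega)]
  rw [hrest]
  rw [mem_FF] at hc ha'
  simp only [Finset.mem_Icc] at hc ha'
  have hnj : ∀ k, 3 ≤ k → k ≤ n → a' k ≠ j + 1 := by
    intro k h4 h5 h6
    apply hai 2 k le_rfl (by omega) h5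
    rw [h1, h3 k (by omega), h6]
  have hnj' : ∀ k, 3 ≤ k → k ≤ n → a' k ≠ j := by
    intro k h4 h5 h6
    apply hai' 2 k le_rfl (by omega) h5
    rw [h2, h6]
  have hsurj : ∀ z, 1 ≤ z → z ≤ n → z = j + 1 ∨ ∃ k, 2 ≤ k ∧ k ≤ n ∧ a' k = z := by
    intro z hz hz'
    by_contra hcon
    push Not at hcon
    obtain ⟨n1, n2⟩ := hcon
    obtain ⟨x, y, hxy, hy, he⟩ := pigeon (n := n)
      (fun k => if k = 0 then z else if k = 1 then j + 1 else a' k) (by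
        intro x hx
        split_ifs
        · omega
        · omega
        · exact ha'.1 _ (by omega))
    rw [if_neg (by omega : y ≠ 0)] at he
    by_cases x0 : x = 0
    · rw [if_pos x0] at he
      split_ifs at he with h4
      · exact n1 he
      · exact n2 y (by omega) hy he.symm
    rw [if_neg x0, if_neg (by omega : y ≠ 1)] at he
    split_ifs at he with h4
    · by_cases h5 : y = 2
      · rw [h5, h2] at he; omega
      · exact hnj y (by omega) hy he.symm
    · exact hai' x y (by omega) hxy hy he
  have hloc2 : ∀ b : ℕ → ℕ, (∀ k, k ≠ 2 → b k = a' k) →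
      (Loc n b c 2 ↔ (c 2 = j ∨ c 2 = j + 1)) := by
    intro b hb
    constructor
    · intro h
      rcases hsurj (c 2) (hc.1 2 (by omega)).1 (hc.1 2 (by omega)).2 with h4 | ⟨k, h4, h5, h6⟩
      · right; exact h4
      · by_cases h7 : k = 2
        · left; rw [← h6, h7, h2]
        · exact absurd (by rw [hb k h7, h6]) (h.1 k (by omega) h5)
    · intro h
      refine ⟨fun k h4 h5 h6 => ?_, ?_⟩
      · rw [hb k (by omega)] at h6
        rcases h with h | h
        · exact hnj' k (by omega) h5 (by omega)
        · exact hnj k (by omega) h5 (by omega)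
      · rcases le_or_gt (b 2) (c 2) with h4 | h4
        · left; exact ⟨h4, fun k _ _ => by omega⟩
        · right; exact ⟨h4, fun k _ _ => by omega⟩
  have hca : c = a' → c 2 = j := by rintro rfl; exact h2
  have ht : ∀ b : ℕ → ℕ, (∀ k, k ≠ 2 → b k = a' k) → tt n p m b c 2 =
      if (c 2 = j ∨ c 2 = j + 1) then (if c 2 < b 2 then X ^ m else 1) else 0 := by
    intro b hb
    unfold tt
    rw [LL_lt le_rfl (by omega)]
    simp only [hloc2 b hb]
  rw [ht a h3, ht a' (fun _ _ => rfl), h1, h2]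
  by_cases hcj : c 2 = j
  · rw [if_pos (Or.inl hcj), if_pos (Or.inl hcj), if_pos (by omega), if_neg (by omega)]
    by_cases hz : ∏ k ∈ Finset.Icc 3 n, tt n p m a' c k = 0
    · have : c ≠ a' := by
        rintro rfl
        have : ∏ k ∈ Finset.Icc 3 n, tt n p m c c k = 1 := by
          apply Finset.prod_eq_one
          intro k hk
          rw [Finset.mem_Icc] at hk
          unfold tt
          rw [if_pos, if_neg (by omega)]
          refine ⟨fun i' h4 h5 => hci k i' (by omega) h4 h5, Or.inl ⟨le_rfl, fun _ _ _ h => h⟩⟩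
        rw [this] at hz
        exact one_ne_zero hz
      rw [hz, if_neg this]; ring
    · have hL : ∀ k, 3 ≤ k → k ≤ n → Loc n a' c k := by
        intro k h4 h5
        by_contra h6
        apply hz
        apply Finset.prod_eq_zero (i := k)
        · rw [Finset.mem_Icc]; omega
        · unfold tt; rw [if_neg h6]
      have hEq : ∀ k, 2 ≤ k → k ≤ n → c k = a' k := by
        intro k
        induction k using Nat.strong_induction_on with
        | _ k ih =>
          intro h4 h5
          by_cases h6 : k = 2
          · rw [h6, hcj, h2]
          have hl := hL k (by omega) h5
          have hck := hc.1 k (by omega)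
          rcases hsurj (c k) hck.1 hck.2 with h7 | ⟨i, h7, h8, h9⟩
          · exfalso
            have hj := hnj k (by omega) h5
            have hj' := hnj' k (by omega) h5
            rcases hl.2 with ⟨g1, g2⟩ | ⟨g1, g2⟩
            · have := g2 2 le_rfl (by omega)
              omega
            · have := g2 2 le_rfl (by omega)
              omega
          · rcases lt_trichotomy i k with h | h | h
            · exfalso
              have := ih i h h7 (by omega)
              exact hci i k h7 h h5 (by omega)
            · rw [← h9, h]
            · exact absurd h9.symm (hl.1 i h h8)
      have hceq : c = a' := by
        funext k
        by_cases hk : 2 ≤ k ∧ k ≤ n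
        · exact hEq k hk.1 hk.2
        · rw [hc.2 k hk, ha'.2 k hk]
      have : ∏ k ∈ Finset.Icc 3 n, tt n p m a' c k = 1 := by
        apply Finset.prod_eq_one
        intro k hk
        rw [Finset.mem_Icc] at hk
        unfold tt
        rw [if_pos (hL k hk.1 hk.2), if_neg (by rw [hceq]; omega)]
      rw [this, if_pos hceq]; ring
  · rw [if_neg (fun h => hcj (hca h))]
    by_cases hcj' : c 2 = j + 1
    · rw [if_pos (Or.inr hcj'), if_pos (Or.inr hcj'), if_neg (by omega), if_neg (by omega)]
      ring
    · rw [if_neg (by omega), if_neg (by omega)]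
      ring

lemma diff_main {n p m j : ℕ} (hn : 3 ≤ n) (hm : 1 ≤ m) (hj1 : 1 ≤ j) (hj2 : j + 1 ≤ n)
    (κ : ℕ → ℤ) (q : ℕ) (hq : 2 ≤ q) : q < n → ∀ (a a' : ℕ → ℕ),
    a ∈ FF (Finset.Icc 2 n) n → Inj n a → a' ∈ FF (Finset.Icc 2 n) n → Inj n a' →
    a q = j + 1 → a' q = j → (∀ k, k ≠ q → a k = a' k) →
    DD n p (m+1) a (fun i => cont n a i + κ i) =
      DD n p (m+1) a' (fun i => cont n a' i + κ i) - (1 - X ^ m) * DD n p m a' κ := by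
  induction q, hq using Nat.le_induction with
  | base =>
    intro _ a a' ha hai ha' hai' h1 h2 h3
    exact diff_base hn hm hj1 hj2 a a' κ ha hai ha' hai' h1 h2 h3
  | succ q hq ih =>
    intro hqn a a' ha hai ha' hai' h1 h2 h3
    have := ih (by omega) (fun x => a (sf q x)) (fun x => a' (sf q x))
      (sf_mem hq hqn ha) (inj_sf hq hqn hai) (sf_mem hq hqn ha') (inj_sf hq hqn hai')
      (by simp only [sf_left]; exact h1) (by simp only [sf_left]; exact h2)
      (by
        intro k hk
        apply h3
        unfold sf; split_ifs <;> omega)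
    rw [cont_sf hq hqn, cont_sf hq hqn, ← DD_sym hq hqn (by omega) a _ ha,
      ← DD_sym hq hqn (by omega) a' _ ha', ← DD_sym hq hqn hm a' _ ha'] at this
    exact this

/-- explicit form of the bottom row with missing value `j` -/
def AA (n j : ℕ) : ℕ → ℕ := fun i =>
  if i = n then 1 else if 2 ≤ i ∧ i < n then (if n + 1 - i < j then n + 1 - i else n + 2 - i) else 0

lemma sort_eq {n j : ℕ} (hj : 2 ≤ j) (hjn : j ≤ n) :
    (((Finset.Icc 1 n).erase j).erase 1).sort (· ≤ ·) =
      (List.range (n - 2)).map (fun t => if t + 2 < j then t + 2 else t + 3) := by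
  have hs : ((List.range (n - 2)).map (fun t => if t + 2 < j then t + 2 else t + 3)).Pairwise
      (· < ·) := by
    rw [List.pairwise_map]
    refine List.Pairwise.imp ?_ List.pairwise_lt_range
    intro a b hab
    split_ifs <;> omega
  have hf : ((Finset.Icc 1 n).erase j).erase 1 =
      ((List.range (n - 2)).map (fun t => if t + 2 < j then t + 2 else t + 3)).toFinset := by
    ext x
    simp only [Finset.mem_erase, Finset.mem_Icc, List.mem_toFinset, List.mem_map, List.mem_range]
    constructor
    · rintro ⟨h1, h2, h3, h4⟩
      by_cases h : x < j
      · exact ⟨x - 2, by omega, by rw [if_pos (by omega)]; omega⟩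
      · exact ⟨x - 3, by omega, by rw [if_neg (by omega)]; omega⟩
    · rintro ⟨t, h1, h2⟩
      split_ifs at h2 <;> omega
  rw [hf]
  exact (List.toFinset_sort (· ≤ ·) (hs.imp (fun h => ne_of_lt h))).2 (hs.imp (fun h => le_of_lt h))

lemma aTuple_eq {n j : ℕ} (hj : 2 ≤ j) (hjn : j ≤ n) (i : ℕ) (hi : 2 ≤ i)
    (hi' : i ≤ n) : aTuple n j 1 i = AA n j i := by
  unfold aTuple AA
  by_cases h : i = n
  · simp [h]
  · rw [if_neg h, if_neg h, if_pos ⟨hi, by omega⟩, sort_eq hj hjn, List.getD_eq_getElem?_getD,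
      List.getElem?_map, List.getElem?_range (by omega)]
    simp only [Option.map_some, Option.getD_some]
    split_ifs <;> omega

lemma DD_congr {n p m : ℕ} (a b : ℕ → ℕ) (κ κ' : ℕ → ℤ) (h : ∀ i, 2 ≤ i → i ≤ n → a i = b i)
    (hk : ∀ i, 1 ≤ i → i ≤ n → κ i = κ' i) : DD n p m a κ = DD n p m b κ' := by
  classical
  unfold DD
  apply Finset.sum_congr _ (fun _ _ => rfl)
  apply Finset.filter_congr
  intro τ _
  unfold DCond
  constructor
  · rintro ⟨h1, h2, h3⟩
    exact ⟨fun i a1 a2 => by rw [← h i a1 a2, h1 i a1 a2], h2,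
      fun i a1 a2 => by rw [← hk i a1 a2, h3 i a1 a2]⟩
  · rintro ⟨h1, h2, h3⟩
    exact ⟨fun i a1 a2 => by rw [h i a1 a2, h1 i a1 a2], h2,
      fun i a1 a2 => by rw [hk i a1 a2, h3 i a1 a2]⟩

lemma AA_mem {n j : ℕ} (hn : 3 ≤ n) : AA n j ∈ FF (Finset.Icc 2 n) n := by
  rw [mem_FF]
  simp only [Finset.mem_Icc]
  refine ⟨fun u hu => ?_, fun u hu => ?_⟩
  · unfold AA; split_ifs <;> omega
  · unfold AA; split_ifs <;> omega

lemma AA_inj {n j : ℕ} : Inj n (AA n j) := by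
  intro x y hx hxy hy
  unfold AA; split_ifs <;> omega

lemma AA_cont {n j : ℕ} (hn : 3 ≤ n) (hj : 2 ≤ j) (hjn : j ≤ n) (i : ℕ) (hi : 1 ≤ i)
    (hi' : i ≤ n) : cont n (AA n j) i = if i = j then 0 else 1 := by
  unfold cont
  by_cases h : i = j
  · rw [if_pos h]
    have : (Finset.Icc 2 n).filter (fun x => AA n j x = i) = ∅ := by
      rw [Finset.filter_eq_empty_iff]
      intro x hx
      rw [Finset.mem_Icc] at hx
      unfold AA; split_ifs <;> omega
    rw [this]; rfl
  · rw [if_neg h]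
    have : (Finset.Icc 2 n).filter (fun x => AA n j x = i) =
        {if i = 1 then n else if i < j then n + 1 - i else n + 2 - i} := by
      ext x
      simp only [Finset.mem_filter, Finset.mem_Icc, Finset.mem_singleton]
      unfold AA
      constructor
      · rintro ⟨h1, h2⟩
        split_ifs at * <;> omega
      · intro h1
        split_ifs at * <;> omega
    rw [this]; simp

lemma cBar_eq {n p m j : ℕ} (hn : 3 ≤ n) (hm : 1 ≤ m) (hj : 2 ≤ j) (hjn : j ≤ n) (k : ℕ → ℕ) :
    cBar n (LL n p m) j 1 k = DD n p m (AA n j) (fun i => (k i : ℤ)) := by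
  unfold cBar
  rw [cCoef_eq (by omega) hm]
  exact DD_congr _ _ _ _ (fun i h1 h2 => aTuple_eq hj hjn i h1 h2) (fun _ _ _ => rfl)

lemma cBar_eq' {n p m j : ℕ} (hn : 3 ≤ n) (hm : 1 ≤ m) (hj : 2 ≤ j) (hjn : j ≤ n) (k : ℕ → ℕ) :
    cBar n (LL n p m) j 1 (fun i => if i = j then k i else k i + 1) =
      DD n p m (AA n j) (fun i => cont n (AA n j) i + (k i : ℤ)) := by
  rw [cBar_eq hn hm hj hjn]
  apply DD_congr _ _ _ _ (fun _ _ _ => rfl)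
  intro i h1 h2
  rw [AA_cont hn hj hjn i h1 h2]
  split_ifs <;> push_cast <;> ring

theorem cbar_main {n p m j : ℕ} (hn : 3 ≤ n) (hm : 1 ≤ m) (hj1 : 2 ≤ j) (hj2 : j + 1 ≤ n)
    (k : ℕ → ℕ) :
    cBar n (LL n p (m+1)) j 1 (fun i => if i = j then k i else k i + 1)
      = cBar n (LL n p (m+1)) (j + 1) 1 (fun i => if i = j + 1 then k i else k i + 1) -
          (1 - X ^ m) * cBar n (LL n p m) (j + 1) 1 k := by
  rw [cBar_eq' hn (by omega) hj1 (by omega), cBar_eq' hn (by omega) (by omega) hj2,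
    cBar_eq hn hm (by omega) hj2]
  apply diff_main hn hm (by omega) hj2 _ (n + 1 - j) (by omega) (by omega) _ _
    (AA_mem hn) AA_inj (AA_mem hn) AA_inj
  · unfold AA; split_ifs <;> omega
  · unfold AA; split_ifs <;> omega
  · intro x hx
    unfold AA; split_ifs <;> omega

end CO

open CO in
/-- Subtracting the recurrences for consecutive `j`:
`c^{λ⁺}_{j|1}(…, k_j, …) = c^{λ⁺}_{j+1|1}(…, k_{j+1}, …) - (1 - q^{m₂}) c^λ_{j+1|1}(k)`,
with `λ = (0, m₂, …, m₂, m₁+m₂)` and `λ⁺ = (0, m₂+1, …, m₂+1, m₁+m₂+1)`. -/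
theorem cbar_difference (n : ℕ) (hn : 3 ≤ n) (m₁ m₂ : ℕ) (hm₂ : 1 ≤ m₂)
    (lam lamP : ℕ → ℕ)
    (hlam : lam = fun i => if i = n then m₁ + m₂ else if 2 ≤ i then m₂ else 0)
    (hlamP : lamP = fun i => if i = n then m₁ + m₂ + 1 else if 2 ≤ i then m₂ + 1 else 0)
    (j : ℕ) (hj1 : 2 ≤ j) (hj2 : j ≤ n - 1) (k : ℕ → ℕ) :
    cBar n lamP j 1 (fun i => if i = j then k i else k i + 1)
      = cBar n lamP (j + 1) 1 (fun i => if i = j + 1 then k i else k i + 1) -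
          (1 - Polynomial.X ^ m₂) * cBar n lam (j + 1) 1 k := by

  have e1 : lam = CO.LL n m₁ m₂ := hlam
  have e2 : lamP = CO.LL n m₁ (m₂ + 1) := hlamP
  rw [e1, e2]
  exact CO.cbar_main hn hm₂ hj1 (by omega) k
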